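/- Let h_0 > 0 and for each n set k = k(n) = ⌊(log n^d)^{1/d}⌋, and let 𝒯_n(h_0) := {x^n ∈ Σ^n : H(𝜇̃_x^{k(n),n}) ≤ k(n)^d · h_0}. Then for every ergodic process μ on Σ = 𝒜^{ℤ_{≥0}^d} with entropy rate h(μ) < h_0, lim_{n→∞} μ^n(𝒯_n(h_0)) = 1. -/

import Mathlib

open MeasureTheory Filter Topology

namespace SRU1408

/-- A site of the lattice `ℤ_{≥0}^d`. -/
abbrev Site (d : ℕ) := Fin d → ℕ

/-- An infinite array over the alphabet `Fin A`, i.e. an element of `Σ = 𝒜^{ℤ_{≥0}^d}`. -/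
abbrev Config (A d : ℕ) := Site d → Fin A

/-- A cubical `k`-word, i.e. an element of `Σ^k = 𝒜^{Λ_k}`. -/
abbrev Word (A d k : ℕ) := (Fin d → Fin k) → Fin A

variable {A d : ℕ}

/-- The pattern of `x` on the cube `Λ_k + c`, as a `k`-word. -/
def wordAt (x : Config A d) (k : ℕ) (c : Site d) : Word A d k :=
  fun i => x fun j => c j + (i j : ℕ)

/-- The lattice shift `σ_r`. -/
def shift (r : Site d) (x : Config A d) : Config A d := fun i => x (i + r)

/-- Stationarity: invariance under all shifts. -/
def Stationary (μ : Measure (Config A d)) : Prop := ∀ r : Site d, μ.map (shift r) = μ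

/-- Ergodicity: stationary, and every measurable set invariant under all shifts is trivial. -/
def ErgodicShift (μ : Measure (Config A d)) : Prop :=
  Stationary μ ∧ ∀ E : Set (Config A d), MeasurableSet E →
    (∀ r : Site d, shift r ⁻¹' E = E) → μ E = 0 ∨ μ E = 1

/-- The `k`-word marginal distribution `μ^k`, as a probability vector on `Σ^k`. -/
noncomputable def wordDist (μ : Measure (Config A d)) (k : ℕ) : Word A d k → ℝ :=
  fun w => (μ {x | wordAt x k 0 = w}).toReal

/-- Base-`A` entropy of a probability vector. -/
noncomputable def entH (A : ℕ) {W : Type*} [Fintype W] (p : W → ℝ) : ℝ :=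
  -∑ w, p w * Real.logb A (p w)

/-- `μ` has entropy rate `h` (base-`A` logarithms): `H(μ^n)/n^d → h`. -/
def HasEntropyRate (μ : Measure (Config A d)) (h : ℝ) : Prop :=
  Tendsto (fun n : ℕ => entH A (wordDist μ n) / (n : ℝ) ^ d) atTop (𝓝 h)

/-- The empirical non-overlapping `k`-block distribution `𝜇̃_x^{k,n}` of `x` over `Λ_n`. -/
noncomputable def empDist (x : Config A d) (k n : ℕ) : Word A d k → ℝ := fun w =>
  (Set.ncard {r : Fin d → Fin (n / k) | wordAt x k (fun j => k * (r j : ℕ)) = w} : ℝ) /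
    ((n / k : ℕ) : ℝ) ^ d

/-- The empirical probability `𝜇̃_x^{k,n}(S)` of a set `S` of `k`-words. -/
noncomputable def empProb (x : Config A d) (k n : ℕ) (S : Set (Word A d k)) : ℝ :=
  (Set.ncard {r : Fin d → Fin (n / k) | wordAt x k (fun j => k * (r j : ℕ)) ∈ S} : ℝ) /
    ((n / k : ℕ) : ℝ) ^ d

/-- `k(n) = ⌊(log_A n^d)^{1/d}⌋`. -/
noncomputable def kOf (A d n : ℕ) : ℕ :=
  ⌊(Real.logb A ((n : ℝ) ^ d)) ^ (1 / (d : ℝ))⌋₊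

/-- The Gibbs inequality: entropy is at most the cross entropy relative to a subprobability vector. -/
theorem entH_le_crossEntropy {A : ℕ} (hA : 2 ≤ A) {W : Type*} [Fintype W] (p q : W → ℝ)
    (hp : ∀ w, 0 ≤ p w) (hp1 : ∑ w, p w = 1) (hq : ∀ w, 0 < q w) (hq1 : ∑ w, q w ≤ 1) :
    entH A p ≤ ∑ w, p w * -Real.logb A (q w) := by
  have hlog : 0 < Real.log A := Real.log_pos (by exact_mod_cast hA)
  have key : ∀ w, p w * (Real.log (q w) - Real.log (p w)) ≤ q w - p w := by
    intro w
    rcases (hp w).eq_or_lt with h0 | h0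
    · rw [← h0]
      simpa using (hq w).le
    · rw [← Real.log_div (hq w).ne' h0.ne']
      calc p w * Real.log (q w / p w) ≤ p w * (q w / p w - 1) := by
            gcongr
            exact Real.log_le_sub_one_of_pos (div_pos (hq w) h0)
        _ = q w - p w := by field_simp
  have hsum : ∑ w, p w * (Real.log (q w) - Real.log (p w)) ≤ 0 := by
    refine (Finset.sum_le_sum fun w _ => key w).trans ?_
    rw [Finset.sum_sub_distrib, hp1]
    linarith
  have hdiff : entH A p - ∑ w, p w * -Real.logb A (q w) =
      (∑ w, p w * (Real.log (q w) - Real.log (p w))) / Real.log A := by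
    rw [entH, Finset.sum_div, ← Finset.sum_neg_distrib, ← Finset.sum_sub_distrib]
    refine Finset.sum_congr rfl fun w _ => ?_
    simp only [Real.logb]
    ring
  have := div_nonpos_of_nonpos_of_nonneg hsum hlog.le
  linarith

/-- Summing over all words a product of weights of disjoint equal subwords. -/
theorem sum_prod_comp_injective {S C B α : Type*} [Fintype S] [Fintype C] [Fintype B] [Fintype α]
    [DecidableEq S] [DecidableEq C] [DecidableEq B] (e : C × B → S) (he : Function.Injective e)
    (q : (B → α) → ℝ) :
    ∑ w : S → α, ∏ c, q (fun b => w (e (c, b))) =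
      (Fintype.card α : ℝ) ^ (Fintype.card S - Fintype.card C * Fintype.card B) *
        (∑ v, q v) ^ Fintype.card C := by
  classical
  let E : (S → α) ≃ (C → B → α) × ({s // ¬ s ∈ Set.range e} → α) :=
    (Equiv.piEquivPiSubtypeProd (fun s => s ∈ Set.range e) fun _ => α).trans
      (Equiv.prodCongr ((Equiv.arrowCongr (Equiv.ofInjective e he).symm (Equiv.refl α)).trans
        (Equiv.curry C B α)) (Equiv.refl _))
  have hE : ∀ w c b, (E w).1 c b = w (e (c, b)) := fun w c b => rfl
  have hcard : Fintype.card {s // ¬ s ∈ Set.range e} =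
      Fintype.card S - Fintype.card C * Fintype.card B := by
    rw [Fintype.card_subtype_compl, ← Fintype.card_prod]
    congr 1
    exact (Fintype.card_congr (Equiv.ofInjective e he)).symm
  calc ∑ w : S → α, ∏ c, q (fun b => w (e (c, b)))
      = ∑ w : S → α, ∏ c, q ((E w).1 c) := rfl
    _ = ∑ v : (C → B → α) × ({s // ¬ s ∈ Set.range e} → α), ∏ c, q (v.1 c) :=
        E.sum_comp fun v => ∏ c, q (v.1 c)
    _ = _ := by
        rw [Fintype.sum_prod_type]
        simp only [Finset.sum_const, Finset.card_univ, Fintype.card_fun, nsmul_eq_mul, hcard]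
        rw [← Finset.mul_sum, ← Fintype.prod_sum]
        simp

/-- The cube `Λ_M` as a finite set of sites. -/
def cube (d M : ℕ) : Finset (Site d) := Fintype.piFinset fun _ => Finset.range M

theorem mem_cube {M : ℕ} {i : Site d} : i ∈ cube d M ↔ ∀ j, i j < M := by
  simp [cube]

theorem card_cube (d M : ℕ) : (cube d M).card = M ^ d := by
  simp [cube]

/-- Averages against the empirical block distribution are averages over blocks. -/
theorem sum_empDist_mul (x : Config A d) (k n : ℕ) (g : Word A d k → ℝ) :
    ∑ w, empDist x k n w * g w =
      (∑ r : Fin d → Fin (n / k), g (wordAt x k fun j => k * (r j : ℕ))) /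
        ((n / k : ℕ) : ℝ) ^ d := by
  classical
  rw [← Finset.sum_fiberwise Finset.univ
    (fun r : Fin d → Fin (n / k) => wordAt x k fun j => k * (r j : ℕ)), Finset.sum_div]
  refine Finset.sum_congr rfl fun w _ => ?_
  rw [Finset.sum_congr rfl fun r hr => congrArg g (Finset.mem_filter.mp hr).2, Finset.sum_const,
    nsmul_eq_mul, empDist, Set.ncard_eq_toFinset_card', Set.toFinset_ofPred]
  ring

theorem sum_empDist (x : Config A d) {k n : ℕ} (h : 0 < n / k) : ∑ w, empDist x k n w = 1 := by
  have := sum_empDist_mul x k n fun _ => 1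
  simp only [mul_one, Finset.sum_const, Finset.card_univ, Fintype.card_fun, Fintype.card_fin,
    nsmul_eq_mul, Nat.cast_pow] at this
  rw [this, div_self (by positivity)]

/-- The site of a `k`-cube at place `b` of the `c`-th `m`-cell, cells being offset by `s`. -/
def cellSite {m L k : ℕ} (hk : m * (L + 1) ≤ k) (s : Fin d → Fin m)
    (cb : (Fin d → Fin L) × (Fin d → Fin m)) : Fin d → Fin k := fun j =>
  ⟨s j + m * cb.1 j + cb.2 j, by
    have h1 := (s j).isLt
    have h2 := (cb.2 j).isLt
    have h3 : m * (cb.1 j + 1 : ℕ) ≤ m * L := Nat.mul_le_mul_left m (cb.1 j).isLt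
    nlinarith⟩

theorem cellSite_injective {m L k : ℕ} (hk : m * (L + 1) ≤ k) (s : Fin d → Fin m) :
    Function.Injective (cellSite (d := d) (L := L) hk s) := by
  rintro ⟨c, b⟩ ⟨c', b'⟩ heq
  have h : ∀ j, (c j : ℕ) = c' j ∧ (b j : ℕ) = b' j := by
    intro j
    have h1 : (s j : ℕ) + m * c j + b j = s j + m * c' j + b' j :=
      congrArg Fin.val (congrFun heq j)
    have hb := (b j).isLt
    have hb' := (b' j).isLt
    have h2 : (b j : ℕ) + m * c j = b' j + m * c' j := by omega
    have hm : 0 < m := by omega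
    have h3 := congrArg (· / m) h2
    have h4 := congrArg (· % m) h2
    simp only [Nat.add_mul_div_left _ _ hm, Nat.add_mul_mod_self_left, Nat.div_eq_of_lt hb,
      Nat.div_eq_of_lt hb', Nat.mod_eq_of_lt hb, Nat.mod_eq_of_lt hb', zero_add] at h3 h4
    exact ⟨h3, h4⟩
  ext j
  · exact (h j).1
  · exact (h j).2

/-- Summing over blocks, offsets and cells visits every site of the big cube at most once. -/
theorem sum_cells_le_sum_cube {m L k N : ℕ} (hk : m * (L + 1) ≤ k) (F : Site d → ℝ)
    (hF : ∀ i, 0 ≤ F i) :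
    ∑ s : Fin d → Fin m, ∑ r : Fin d → Fin N, ∑ c : Fin d → Fin L,
        F (fun j => k * (r j : ℕ) + (s j + m * c j)) ≤
      ∑ i ∈ cube d (k * N), F i := by
  classical
  let Φ : (Fin d → Fin m) × (Fin d → Fin N) × (Fin d → Fin L) → Site d :=
    fun t j => k * (t.2.1 j : ℕ) + (t.1 j + m * t.2.2 j)
  have hbd : ∀ (a : Fin m) (c : Fin L), (a : ℕ) + m * c < k := by
    intro a c
    have h1 := a.isLt
    have h3 : m * (c + 1 : ℕ) ≤ m * L := Nat.mul_le_mul_left m c.isLt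
    nlinarith
  have hinj : Function.Injective Φ := by
    rintro ⟨s, r, c⟩ ⟨s', r', c'⟩ heq
    have h : ∀ j, (s j : ℕ) = s' j ∧ (r j : ℕ) = r' j ∧ (c j : ℕ) = c' j := by
      intro j
      have h1 : (s j + m * c j : ℕ) + k * r j = (s' j + m * c' j : ℕ) + k * r' j := by
        have : k * (r j : ℕ) + (s j + m * c j) = k * (r' j : ℕ) + (s' j + m * c' j) :=
          congrFun heq j
        omega
      have hs := (s j).isLt
      have hs' := (s' j).isLt
      have hm : 0 < m := by omega
      have hb := hbd (s j) (c j)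
      have hb' := hbd (s' j) (c' j)
      have hk0 : 0 < k := by omega
      have h3 := congrArg (· / k) h1
      have h4 := congrArg (· % k) h1
      simp only [Nat.add_mul_div_left _ _ hk0, Nat.add_mul_mod_self_left, Nat.div_eq_of_lt hb,
        Nat.div_eq_of_lt hb', Nat.mod_eq_of_lt hb, Nat.mod_eq_of_lt hb', zero_add] at h3 h4
      have h5 := congrArg (· / m) h4
      have h6 := congrArg (· % m) h4
      simp only [Nat.add_mul_div_left _ _ hm, Nat.add_mul_mod_self_left, Nat.div_eq_of_lt hs,
        Nat.div_eq_of_lt hs', Nat.mod_eq_of_lt hs, Nat.mod_eq_of_lt hs', zero_add] at h5 h6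
      exact ⟨h6, h3, h5⟩
    ext j
    · exact (h j).1
    · exact (h j).2.1
    · exact (h j).2.2
  calc _ = ∑ t, F (Φ t) := by simp only [Fintype.sum_prod_type]; rfl
    _ = ∑ i ∈ Finset.univ.image Φ, F i := (Finset.sum_image fun a _ b _ h => hinj h).symm
    _ ≤ _ := by
      refine Finset.sum_le_sum_of_subset_of_nonneg ?_ fun i _ _ => hF i
      intro i hi
      obtain ⟨⟨s, r, c⟩, -, rfl⟩ := Finset.mem_image.mp hi
      rw [mem_cube]
      intro j
      have h3 : k * (r j + 1 : ℕ) ≤ k * N := Nat.mul_le_mul_left k (r j).isLt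
      have := hbd (s j) (c j)
      change k * (r j : ℕ) + (s j + m * c j) < k * N
      linarith

/-- The entropy of the empirical `k`-block distribution is bounded by the spatial average of the
code length of any code for `m`-words, up to a boundary term. -/
theorem entH_empDist_le (hA : 2 ≤ A) {m L k n : ℕ} (hm : 0 < m) (hk : m * (L + 1) ≤ k)
    (hn : 0 < n / k) (q : Word A d m → ℝ) (hq : ∀ v, 0 < q v) (hq1 : ∑ v, q v = 1)
    (x : Config A d) :
    entH A (empDist x k n) ≤
      (k : ℝ) ^ d / (m : ℝ) ^ d * ((∑ i ∈ cube d (k * (n / k)), -Real.logb A (q (wordAt x m i))) /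
        ((k * (n / k) : ℕ) : ℝ) ^ d) + ((k : ℝ) ^ d - ((L * m : ℕ) : ℝ) ^ d) := by
  have hA1 : (1 : ℝ) < A := by exact_mod_cast hA
  have hA0 : (0 : ℝ) < A := by linarith
  have hkpos : 0 < k := lt_of_lt_of_le (Nat.mul_pos hm L.succ_pos) hk
  have hLm : (L * m) ^ d ≤ k ^ d := by
    apply Nat.pow_le_pow_left
    nlinarith
  have hqle : ∀ v, q v ≤ 1 := fun v =>
    hq1 ▸ Finset.single_le_sum (fun u _ => (hq u).le) (Finset.mem_univ v)
  have hcost : ∀ v, 0 ≤ -Real.logb A (q v) := fun v =>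
    neg_nonneg.mpr (Real.logb_nonpos hA1 (hq v).le (hqle v))
  set N := n / k with hN
  set R : ℕ := k ^ d - (L * m) ^ d with hR
  have hRr : (R : ℝ) = (k : ℝ) ^ d - ((L * m : ℕ) : ℝ) ^ d := by
    rw [hR, Nat.cast_sub hLm]
    push_cast
    ring
  have hoff : ∀ s : Fin d → Fin m, entH A (empDist x k n) ≤
      (∑ r : Fin d → Fin N, ∑ c : Fin d → Fin L,
        -Real.logb A (q (wordAt x m fun j => k * (r j : ℕ) + (s j + m * c j)))) / (N : ℝ) ^ d
        + R := by
    intro s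
    let Q : Word A d k → ℝ := fun w =>
      (∏ c : Fin d → Fin L, q (fun b => w (cellSite hk s (c, b)))) * ((A : ℝ) ^ R)⁻¹
    have hprod : ∀ w : Word A d k,
        0 < ∏ c : Fin d → Fin L, q (fun b => w (cellSite hk s (c, b))) :=
      fun w => Finset.prod_pos fun c _ => hq _
    have hQ1 : ∑ w, Q w ≤ 1 := by
      rw [← Finset.sum_mul, sum_prod_comp_injective _ (cellSite_injective hk s), hq1]
      simp only [Fintype.card_fun, Fintype.card_fin, one_pow, mul_one, ← mul_pow, ← hR]
      rw [mul_inv_cancel₀ (by positivity)]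
    refine (entH_le_crossEntropy hA _ Q (fun w => by unfold empDist; positivity)
      (sum_empDist x hn) (fun w => mul_pos (hprod w) (by positivity)) hQ1).trans ?_
    rw [sum_empDist_mul]
    have hlogQ : ∀ r : Fin d → Fin N,
        -Real.logb A (Q (wordAt x k fun j => k * (r j : ℕ))) =
          (∑ c : Fin d → Fin L,
            -Real.logb A (q (wordAt x m fun j => k * (r j : ℕ) + (s j + m * c j)))) + R := by
      intro r
      have hcell : ∀ c : Fin d → Fin L,
          (fun b => wordAt x k (fun j => k * (r j : ℕ)) (cellSite hk s (c, b))) =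
            wordAt x m fun j => k * (r j : ℕ) + (s j + m * c j) := by
        intro c
        funext b
        simp only [wordAt, cellSite, add_assoc]
      simp only [Q]
      rw [Real.logb_mul (hprod _).ne' (by positivity), Real.logb_inv, Real.logb_pow,
        Real.logb_self_eq_one hA1, Real.logb_prod _ _ fun c _ => (hq _).ne']
      simp only [hcell, Finset.sum_neg_distrib]
      ring
    have hNd : (N : ℝ) ^ d ≠ 0 := by positivity
    simp only [← hN, hlogQ, Finset.sum_add_distrib, Finset.sum_const, Finset.card_univ,
      Fintype.card_fun, Fintype.card_fin, nsmul_eq_mul, Nat.cast_pow]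
    rw [add_div, mul_div_cancel_left₀ _ hNd]
  have havg := Finset.sum_le_sum fun (s : Fin d → Fin m) (_ : s ∈ Finset.univ) => hoff s
  have hcube := sum_cells_le_sum_cube (d := d) (N := N) hk
    (fun i => -Real.logb A (q (wordAt x m i))) fun i => hcost _
  rw [Finset.sum_add_distrib, ← Finset.sum_div] at havg
  simp only [Finset.sum_const, Finset.card_univ, Fintype.card_fun, Fintype.card_fin,
    nsmul_eq_mul, Nat.cast_pow] at havg
  have hNd : (0 : ℝ) < (N : ℝ) ^ d := by positivity
  have hmd : (0 : ℝ) < (m : ℝ) ^ d := by positivity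
  have hkd : (0 : ℝ) < (k : ℝ) ^ d := by positivity
  have hle := havg.trans (add_le_add_left (div_le_div_of_nonneg_right hcube hNd.le) _)
  rw [← hRr]
  have heq : (k : ℝ) ^ d / (m : ℝ) ^ d *
      ((∑ i ∈ cube d (k * N), -Real.logb A (q (wordAt x m i))) / ((k * N : ℕ) : ℝ) ^ d) + R =
      ((∑ i ∈ cube d (k * N), -Real.logb A (q (wordAt x m i))) / (N : ℝ) ^ d
        + (m : ℝ) ^ d * R) / (m : ℝ) ^ d := by
    rw [Nat.cast_mul, mul_pow]
    field_simp
  rw [heq, le_div_iff₀ hmd]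
  linarith

/-- Cube sums of a bounded family change little under translation. -/
theorem norm_sum_cube_sub_le {H : Type*} [NormedAddCommGroup H] (u : Site d → H) (B : ℝ)
    (hu : ∀ i, ‖u i‖ ≤ B) (t : Site d) (M : ℕ) :
    ‖∑ i ∈ cube d M, u i - ∑ i ∈ cube d M, u (i + t)‖ ≤
      2 * ((M : ℝ) ^ d - ∏ j, ((M - t j : ℕ) : ℝ)) * B := by
  classical
  set S := cube d M with hS
  set S' := S.map (addRightEmbedding t) with hS'
  have hsum : ∑ i ∈ S, u (i + t) = ∑ i ∈ S', u i := by simp [hS']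
  have hI : (∏ j, (M - t j) : ℕ) ≤ (S ∩ S').card := by
    have : Fintype.piFinset (fun j => Finset.Ico (t j) M) ⊆ S ∩ S' := by
      intro i hi
      simp only [Fintype.mem_piFinset, Finset.mem_Ico] at hi
      simp only [Finset.mem_inter, hS', Finset.mem_map, hS, mem_cube, addRightEmbedding_apply]
      refine ⟨fun j => (hi j).2, fun j => i j - t j, fun j => (Nat.sub_le _ _).trans_lt (hi j).2, ?_⟩
      · funext j
        have := hi j
        simp only [Pi.add_apply]
        omega
    simpa using Finset.card_le_card this
  have hc : S.card = M ^ d := card_cube d M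
  have hc' : S'.card = M ^ d := by rw [hS', Finset.card_map, hc]
  have hbound : ∀ P P' : Finset (Site d), P.card = M ^ d → (∏ j, (M - t j) : ℕ) ≤ (P ∩ P').card →
      ‖∑ i ∈ P \ P', u i‖ ≤ ((M : ℝ) ^ d - ∏ j, ((M - t j : ℕ) : ℝ)) * B := by
    intro P P' hP hPP
    have hB : 0 ≤ B := (norm_nonneg _).trans (hu 0)
    refine (norm_sum_le_of_le _ fun i _ => hu i).trans ?_
    rw [Finset.sum_const, nsmul_eq_mul]
    gcongr
    have h1 : ((P \ P').card : ℝ) + (P ∩ P').card = (M : ℝ) ^ d := by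
      exact_mod_cast (Finset.card_sdiff_add_card_inter P P').trans hP
    have h2 : (∏ j, ((M - t j : ℕ) : ℝ)) ≤ (P ∩ P').card := by exact_mod_cast hPP
    linarith
  rw [hsum, ← Finset.sum_sdiff_sub_sum_sdiff]
  have h1 := hbound S S' hc hI
  have h2 := hbound S' S hc' (by rwa [Finset.inter_comm])
  refine (norm_sub_le _ _).trans ?_
  linarith

theorem tendsto_boundary_ratio (t : Site d) (B : ℝ) :
    Tendsto (fun M : ℕ => ((M : ℝ) ^ d)⁻¹ *
      (2 * ((M : ℝ) ^ d - ∏ j, ((M - t j : ℕ) : ℝ)) * B)) atTop (𝓝 0) := by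
  have h1 : ∀ j, Tendsto (fun M : ℕ => ((M - t j : ℕ) : ℝ) / M) atTop (𝓝 1) := by
    intro j
    have : Tendsto (fun M : ℕ => 1 - (t j : ℝ) / M) atTop (𝓝 (1 - 0)) :=
      tendsto_const_nhds.sub (tendsto_const_div_atTop_nhds_zero_nat _)
    rw [sub_zero] at this
    refine this.congr' ?_
    filter_upwards [eventually_ge_atTop (t j + 1)] with M hM
    have : (0 : ℝ) < M := by exact_mod_cast (by omega : 0 < M)
    rw [Nat.cast_sub (by omega)]
    field_simp
  have h2 := tendsto_finsetProd (Finset.univ : Finset (Fin d)) fun j _ => h1 j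
  have h3 : Tendsto (fun M : ℕ => 2 * (1 - ∏ j, ((M - t j : ℕ) : ℝ) / M) * B) atTop
      (𝓝 (2 * (1 - ∏ _j : Fin d, (1 : ℝ)) * B)) := (tendsto_const_nhds.mul
        (tendsto_const_nhds.sub h2)).mul tendsto_const_nhds
  simp only [Finset.prod_const_one, sub_self, mul_zero, zero_mul] at h3
  refine h3.congr' ?_
  filter_upwards [eventually_ge_atTop 1] with M hM
  have : (0 : ℝ) < M := by exact_mod_cast hM
  simp only [Finset.prod_div_distrib, Finset.prod_const, Finset.card_univ, Fintype.card_fin]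
  field_simp

/-- Mean ergodic theorem for actions of `ℤ_{≥0}^d` by isometries of a Hilbert space. -/
theorem exists_tendsto_cube_average {H : Type*} [NormedAddCommGroup H] [InnerProductSpace ℝ H]
    [CompleteSpace H] (T : Site d → H →ₗᵢ[ℝ] H) (hT : ∀ r s y, T r (T s y) = T (r + s) y)
    (f : H) :
    ∃ g, (∀ r, T r g = g) ∧
      Tendsto (fun M : ℕ => ((M : ℝ) ^ d)⁻¹ • ∑ i ∈ cube d M, T i f) atTop (𝓝 g) := by
  set K₀ : Set H := convexHull ℝ (Set.range fun i => T i f) with hK₀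
  have hK₀conv : Convex ℝ K₀ := convex_convexHull ℝ _
  have hne : (closure K₀).Nonempty :=
    ⟨T 0 f, subset_closure (subset_convexHull ℝ _ ⟨0, rfl⟩)⟩
  obtain ⟨g, hgK, hg⟩ := exists_norm_eq_iInf_of_complete_convex hne isClosed_closure.isComplete
    hK₀conv.closure 0
  rw [norm_eq_iInf_iff_real_inner_le_zero hK₀conv.closure hgK] at hg
  have hmapK : ∀ r, Set.MapsTo (T r) (closure K₀) (closure K₀) := by
    intro r
    refine Set.MapsTo.closure ?_ (T r).continuous
    rw [Set.mapsTo_iff_image_subset, hK₀]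
    change (T r).toLinearMap '' _ ⊆ _
    rw [LinearMap.image_convexHull]
    refine convexHull_mono ?_
    rintro _ ⟨_, ⟨i, rfl⟩, rfl⟩
    exact ⟨r + i, (hT r i f).symm⟩
  have hinv : ∀ r, T r g = g := by
    intro r
    have h1 := hg _ (hmapK r hgK)
    rw [zero_sub, inner_neg_left, inner_sub_right, real_inner_self_eq_norm_sq] at h1
    have h2 := norm_sub_sq_real (T r g) g
    rw [(T r).norm_map, real_inner_comm] at h2
    have h3 : ‖T r g - g‖ = 0 := by
      have := norm_nonneg (T r g - g)
      nlinarith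
    exact sub_eq_zero.mp (norm_eq_zero.mp h3)
  let avg : ℕ → H → H := fun M y => ((M : ℝ) ^ d)⁻¹ • ∑ i ∈ cube d M, T i y
  have havg_add : ∀ M y z, avg M (y + z) = avg M y + avg M z := fun M y z => by
    simp [avg, Finset.sum_add_distrib]
  have havg_smul : ∀ M (a : ℝ) y, avg M (a • y) = a • avg M y := fun M a y => by
    simp only [avg, map_smul, ← Finset.smul_sum, smul_comm a]
  have havg_sub : ∀ M y z, avg M (y - z) = avg M y - avg M z := fun M y z => by
    simp [avg, Finset.sum_sub_distrib, smul_sub]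
  have havg_norm : ∀ M y, ‖avg M y‖ ≤ ‖y‖ := by
    intro M y
    rw [norm_smul, norm_inv, norm_pow, Real.norm_natCast]
    have h1 : ‖∑ i ∈ cube d M, T i y‖ ≤ (M : ℝ) ^ d * ‖y‖ := by
      refine (norm_sum_le_of_le _ fun i _ => ((T i).norm_map y).le).trans ?_
      simp [card_cube]
    refine (mul_le_mul_of_nonneg_left h1 (by positivity)).trans ?_
    rw [← mul_assoc]
    exact mul_le_of_le_one_left (norm_nonneg y) inv_mul_le_one
  have hgood : ∀ y ∈ K₀, Tendsto (fun M => avg M f - avg M y) atTop (𝓝 0) := by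
    have hconv : Convex ℝ {y | Tendsto (fun M => avg M f - avg M y) atTop (𝓝 0)} := by
      intro y hy z hz a b _ _ hab
      have := (hy.const_smul a).add (hz.const_smul b)
      simp only [smul_zero, add_zero] at this
      refine this.congr fun M => ?_
      rw [havg_add, havg_smul, havg_smul, smul_sub, smul_sub, ← sub_eq_zero]
      have : avg M f = a • avg M f + b • avg M f := by rw [← add_smul, hab, one_smul]
      nth_rewrite 3 [this]
      abel
    refine convexHull_min ?_ hconv
    rintro _ ⟨t, rfl⟩
    refine squeeze_zero_norm (fun M => ?_) (tendsto_boundary_ratio t ‖f‖)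
    have h1 := norm_sum_cube_sub_le (fun i => T i f) ‖f‖ (fun i => ((T i).norm_map f).le) t M
    simp only [avg, hT, ← smul_sub]
    rw [norm_smul, norm_inv, norm_pow, Real.norm_natCast]
    gcongr
  have hlim : Tendsto (fun M => avg M f - avg M g) atTop (𝓝 0) := by
    rw [Metric.tendsto_atTop]
    intro ε hε
    obtain ⟨y, hy, hyg⟩ := Metric.mem_closure_iff.mp hgK (ε / 2) (half_pos hε)
    obtain ⟨M₀, hM₀⟩ := Metric.tendsto_atTop.mp (hgood y hy) (ε / 2) (half_pos hε)
    refine ⟨M₀, fun M hM => ?_⟩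
    have h1 := hM₀ M hM
    have h2 := havg_norm M (y - g)
    rw [dist_zero_right] at h1 ⊢
    rw [dist_comm, dist_eq_norm] at hyg
    calc ‖avg M f - avg M g‖ = ‖(avg M f - avg M y) + avg M (y - g)‖ := by
          rw [havg_sub]
          abel_nf
      _ ≤ ‖avg M f - avg M y‖ + ‖avg M (y - g)‖ := norm_add_le _ _
      _ < ε := by linarith
  refine ⟨g, hinv, ?_⟩
  have := hlim.add_const g
  rw [zero_add] at this
  refine this.congr' ?_
  filter_upwards [eventually_ge_atTop 1] with M hM
  have hMd : (M : ℝ) ^ d ≠ 0 := by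
    have : (0 : ℝ) < M := by exact_mod_cast hM
    positivity
  have : avg M g = g := by
    simp only [avg, hinv, Finset.sum_const, card_cube, ← Nat.cast_smul_eq_nsmul ℝ, Nat.cast_pow,
      smul_smul]
    rw [inv_mul_cancel₀ hMd, one_smul]
  rw [this, sub_add_cancel]

theorem measurable_shift (r : Site d) : Measurable (shift r : Config A d → Config A d) :=
  measurable_pi_lambda _ fun _ => measurable_pi_apply _

theorem shift_shift (r s : Site d) (x : Config A d) : shift r (shift s x) = shift (r + s) x := by
  funext i
  simp [shift, add_assoc]

theorem Stationary.measurePreserving {μ : Measure (Config A d)} (hμ : Stationary μ) (r : Site d) :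
    MeasurePreserving (shift r) μ μ := ⟨measurable_shift r, hμ r⟩

/-- Almost invariant measurable sets are trivial for an ergodic measure. -/
theorem ErgodicShift.ae_mem_or_ae_notMem {μ : Measure (Config A d)} [IsProbabilityMeasure μ]
    (hμ : ErgodicShift μ) {E : Set (Config A d)} (hE : MeasurableSet E)
    (hinv : ∀ r, ∀ᵐ x ∂μ, shift r x ∈ E ↔ x ∈ E) :
    (∀ᵐ x ∂μ, x ∈ E) ∨ ∀ᵐ x ∂μ, x ∉ E := by
  let F : Set (Config A d) := {x | ∃ R : Site d, ∀ r, shift (r + R) x ∈ E}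
  have hF : MeasurableSet F := by
    have : F = ⋃ R : Site d, ⋂ r : Site d, shift (r + R) ⁻¹' E := by
      ext x
      simp [F]
    rw [this]
    exact .iUnion fun R => .iInter fun r => measurable_shift _ hE
  have hFinv : ∀ t : Site d, shift t ⁻¹' F = F := by
    intro t
    ext x
    constructor
    · rintro ⟨R, hR⟩
      refine ⟨R + t, fun r => ?_⟩
      have := hR r
      rwa [shift_shift, add_assoc] at this
    · rintro ⟨R, hR⟩
      refine ⟨R, fun r => ?_⟩
      rw [shift_shift, add_right_comm]
      exact hR (r + t)
  have hEF : ∀ᵐ x ∂μ, x ∈ F ↔ x ∈ E := by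
    filter_upwards [ae_all_iff.mpr hinv] with x hx
    simp only [F, Set.mem_ofPred_eq, hx, forall_const, exists_const]
  rcases hμ.2 F hF hFinv with h | h
  · right
    filter_upwards [hEF, measure_eq_zero_iff_ae_notMem.mp h] with x hx hxF
    rwa [← hx]
  · left
    filter_upwards [hEF, (mem_ae_iff_prob_eq_one hF).mpr h] with x hx hxF
    exact hx.mp hxF

/-- Almost invariant observables are almost surely constant for an ergodic measure. -/
theorem ErgodicShift.ae_eq_const {μ : Measure (Config A d)} [IsProbabilityMeasure μ]
    (hμ : ErgodicShift μ) {g : Config A d → ℝ} (hg : Measurable g)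
    (hinv : ∀ r, g ∘ shift r =ᵐ[μ] g) : ∃ c, g =ᵐ[μ] Function.const _ c := by
  refine exists_eventuallyEq_const_of_forall_separating MeasurableSet fun U hU => ?_
  refine hμ.ae_mem_or_ae_notMem (E := g ⁻¹' U) (hg hU) fun r => ?_
  filter_upwards [hinv r] with x hx
  rw [Function.comp_apply] at hx
  rw [Set.mem_preimage, Set.mem_preimage, hx]

/-- Mean ergodic theorem in probability for bounded measurable observables. -/
theorem ErgodicShift.tendstoInMeasure_average {μ : Measure (Config A d)} [IsProbabilityMeasure μ]
    (hμ : ErgodicShift μ) {f : Config A d → ℝ} (hf : Measurable f) {B : ℝ}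
    (hB : ∀ x, ‖f x‖ ≤ B) :
    TendstoInMeasure μ (fun (M : ℕ) x => (∑ i ∈ cube d M, f (shift i x)) / (M : ℝ) ^ d) atTop
      fun _ => ∫ x, f x ∂μ := by
  have hmp := hμ.1.measurePreserving
  have hfL : MemLp f 2 μ := MemLp.of_bound hf.aestronglyMeasurable B (ae_of_all _ hB)
  let T : Site d → Lp ℝ 2 μ →ₗᵢ[ℝ] Lp ℝ 2 μ := fun r =>
    Lp.compMeasurePreservingₗᵢ ℝ (shift r) (hmp r)
  have hT : ∀ r s y, T r (T s y) = T (r + s) y := by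
    intro r s y
    have h := Lp.compMeasurePreserving_comp_apply y (hmp s) (hmp r)
    have hcomp : (shift s ∘ shift r : Config A d → Config A d) = shift (r + s) := by
      funext x
      rw [Function.comp_apply, shift_shift, add_comm]
    change Lp.compMeasurePreserving (shift r) (hmp r) (Lp.compMeasurePreserving (shift s) (hmp s) y)
      = Lp.compMeasurePreserving (shift (r + s)) (hmp (r + s)) y
    rw [← h]
    congr 2
  obtain ⟨g, hginv, hg⟩ := exists_tendsto_cube_average T hT hfL.toLp
  obtain ⟨c, hc⟩ := hμ.ae_eq_const (Lp.stronglyMeasurable g).measurable fun r => by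
    have h1 := Lp.coeFn_compMeasurePreserving g (hmp r)
    have h2 : Lp.compMeasurePreserving (shift r) (hmp r) g = g := hginv r
    rw [h2] at h1
    exact h1.symm
  have hae : ∀ M : ℕ, (((M : ℝ) ^ d)⁻¹ • ∑ i ∈ cube d M, T i hfL.toLp : Lp ℝ 2 μ) =ᵐ[μ]
      fun x => (∑ i ∈ cube d M, f (shift i x)) / (M : ℝ) ^ d := by
    intro M
    have h1 : ∀ i ∈ cube d M, (T i hfL.toLp : Config A d → ℝ) =ᵐ[μ] fun x => f (shift i x) := by
      intro i _
      exact (Lp.coeFn_compMeasurePreserving _ (hmp i)).trans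
        ((hmp i).quasiMeasurePreserving.ae_eq_comp hfL.coeFn_toLp)
    have h2 : ∀ᵐ x ∂μ, ∀ i ∈ cube d M, (T i hfL.toLp : Config A d → ℝ) x = f (shift i x) :=
      (Finset.eventually_all _).mpr h1
    filter_upwards [Lp.coeFn_smul ((M : ℝ) ^ d)⁻¹ (∑ i ∈ cube d M, T i hfL.toLp),
      Lp.coeFn_finsetSum (cube d M) fun i => T i hfL.toLp, h2] with x hx1 hx2 hx3
    rw [hx1, Pi.smul_apply, hx2, Finset.sum_apply, Finset.sum_congr rfl hx3, smul_eq_mul,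
      div_eq_inv_mul]
  have hmean : ∫ x, f x ∂μ = c := by
    let u : Lp ℝ 2 μ := (memLp_const 1).toLp
    have hu : (u : Config A d → ℝ) =ᵐ[μ] fun _ => 1 := MemLp.coeFn_toLp _
    have hinner : ∀ y : Lp ℝ 2 μ, inner ℝ u y = ∫ x, y x ∂μ := by
      intro y
      rw [L2.inner_def]
      refine integral_congr_ae ?_
      filter_upwards [hu] with x hx
      simp [hx]
    have huT : ∀ r, T r u = u := by
      intro r
      refine Lp.ext ?_
      exact ((Lp.coeFn_compMeasurePreserving u (hmp r)).trans
        ((hmp r).quasiMeasurePreserving.ae_eq_comp hu)).trans hu.symm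
    have hTinner : ∀ r y, inner ℝ u (T r y) = inner ℝ u y := by
      intro r y
      nth_rewrite 1 [← huT r]
      exact (T r).inner_map_map u y
    have hlim := ((innerSL ℝ u).continuous.tendsto g).comp hg
    have hconst : Tendsto (fun _ : ℕ => (inner ℝ u hfL.toLp : ℝ)) atTop (𝓝 (inner ℝ u g)) := by
      refine hlim.congr' ?_
      filter_upwards [eventually_ge_atTop 1] with M hM
      have hM0 : (0 : ℝ) < M := by exact_mod_cast hM
      simp only [Function.comp_apply, innerSL_apply_apply, inner_smul_right, inner_sum, hTinner,
        Finset.sum_const, card_cube, nsmul_eq_mul, Nat.cast_pow]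
      field_simp
    have heq := tendsto_nhds_unique hconst tendsto_const_nhds
    rw [hinner, hinner, integral_congr_ae hc, integral_congr_ae hfL.coeFn_toLp] at heq
    simpa using heq.symm
  rw [hmean]
  exact (tendstoInMeasure_of_tendsto_Lp hg).congr hae hc

theorem wordAt_shift (x : Config A d) (m : ℕ) (i : Site d) :
    wordAt (shift i x) m 0 = wordAt x m i := by
  funext b
  simp only [wordAt, shift]
  congr 1
  funext j
  simp [add_comm]

theorem measurable_wordAt (m : ℕ) (c : Site d) :
    Measurable fun x : Config A d => wordAt x m c :=
  measurable_pi_lambda _ fun _ => measurable_pi_apply _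

theorem integral_comp_wordAt (μ : Measure (Config A d)) [IsProbabilityMeasure μ] (m : ℕ)
    (g : Word A d m → ℝ) : ∫ x, g (wordAt x m 0) ∂μ = ∑ v, wordDist μ m v * g v := by
  have hmeas := measurable_wordAt (A := A) (d := d) m 0
  have := Measure.isProbabilityMeasure_map (μ := μ) hmeas.aemeasurable
  rw [← integral_map (φ := fun x : Config A d => wordAt x m 0) hmeas.aemeasurable
    (measurable_of_countable g).aestronglyMeasurable, integral_fintype .of_finite]
  refine Finset.sum_congr rfl fun v _ => ?_
  rw [smul_eq_mul, Measure.real, Measure.map_apply hmeas (measurableSet_singleton v)]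
  rfl

theorem sum_wordDist (μ : Measure (Config A d)) [IsProbabilityMeasure μ] (m : ℕ) :
    ∑ v, wordDist μ m v = 1 := by
  have := integral_comp_wordAt μ m fun _ => 1
  simpa using this.symm

/-- A strictly positive probability vector is available whose cross entropy relative to a given
probability vector exceeds the entropy by at most one. -/
theorem exists_pos_crossEntropy_le (hA : 2 ≤ A) {W : Type*} [Fintype W] [Nonempty W]
    (p : W → ℝ) (hp : ∀ w, 0 ≤ p w) (hp1 : ∑ w, p w = 1) :
    ∃ q : W → ℝ, (∀ w, 0 < q w) ∧ ∑ w, q w = 1 ∧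
      ∑ w, p w * -Real.logb A (q w) ≤ entH A p + 1 := by
  have hA1 : (1 : ℝ) < A := by exact_mod_cast hA
  have hcard : (0 : ℝ) < Fintype.card W := by exact_mod_cast Fintype.card_pos
  refine ⟨fun w => (p w + (Fintype.card W : ℝ)⁻¹) / 2, fun w => ?_, ?_, ?_⟩
  · have := hp w
    positivity
  · rw [← Finset.sum_div, Finset.sum_add_distrib, hp1]
    simp only [Finset.sum_const, Finset.card_univ, nsmul_eq_mul]
    rw [mul_inv_cancel₀ hcard.ne']
    norm_num
  · rw [entH, ← hp1, ← Finset.sum_neg_distrib, ← Finset.sum_add_distrib]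
    refine Finset.sum_le_sum fun w _ => ?_
    rcases (hp w).eq_or_lt with h0 | h0
    · simp [← h0]
    · have h1 : Real.logb A (p w / 2) ≤ Real.logb A ((p w + (Fintype.card W : ℝ)⁻¹) / 2) :=
        Real.logb_le_logb_of_le hA1 (by positivity) (by
          have : (0 : ℝ) < (Fintype.card W : ℝ)⁻¹ := by positivity
          linarith)
      have h2 : Real.logb A 2 ≤ 1 := by
        rw [Real.logb_le_iff_le_rpow hA1 two_pos, Real.rpow_one]
        exact_mod_cast hA
      rw [Real.logb_div h0.ne' two_ne_zero] at h1
      nlinarith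

theorem tendsto_kOf (hA : 2 ≤ A) (hd : 1 ≤ d) : Tendsto (kOf A d) atTop atTop := by
  have hA1 : (1 : ℝ) < A := by exact_mod_cast hA
  refine tendsto_nat_floor_atTop.comp ((tendsto_rpow_atTop (by positivity)).comp
    ((Real.tendsto_logb_atTop hA1).comp ?_))
  exact (tendsto_pow_atTop (by omega)).comp tendsto_natCast_atTop_atTop

theorem kOf_le (hA : 2 ≤ A) (hd : 1 ≤ d) {n : ℕ} (hn : 1 ≤ n) : kOf A d n ≤ n := by
  have hA1 : (1 : ℝ) < A := by exact_mod_cast hA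
  have hnd : (1 : ℝ) ≤ (n : ℝ) ^ d := one_le_pow₀ (by exact_mod_cast hn)
  have hlog : Real.logb A ((n : ℝ) ^ d) ≤ (n : ℝ) ^ d := by
    rw [Real.logb_le_iff_le_rpow hA1 (by linarith)]
    have h1 : n ^ d < A ^ (n ^ d) := Nat.lt_pow_self (by omega)
    have h2 : ((n ^ d : ℕ) : ℝ) ≤ ((A ^ (n ^ d) : ℕ) : ℝ) := by exact_mod_cast h1.le
    push_cast at h2
    rwa [← Nat.cast_pow n d, Real.rpow_natCast, Nat.cast_pow]
  refine Nat.floor_le_of_le ?_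
  calc Real.logb A ((n : ℝ) ^ d) ^ (1 / (d : ℝ)) ≤ ((n : ℝ) ^ d) ^ (1 / (d : ℝ)) :=
        Real.rpow_le_rpow (Real.logb_nonneg hA1 hnd) hlog (by positivity)
    _ = n := by
        rw [one_div, Real.pow_rpow_inv_natCast (by positivity) (by omega)]

theorem eventually_boundary_le (d : ℕ) {m : ℕ} (hm : 0 < m) {η : ℝ} (hη : 0 < η) :
    ∀ᶠ k : ℕ in atTop, (k : ℝ) ^ d - (((k / m - 1) * m : ℕ) : ℝ) ^ d ≤ η * (k : ℝ) ^ d := by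
  have h1 : Tendsto (fun k : ℕ => (((k / m - 1) * m : ℕ) : ℝ) / k) atTop (𝓝 1) := by
    have hlow : Tendsto (fun k : ℕ => 1 - ((2 * m : ℕ) : ℝ) / k) atTop (𝓝 (1 - 0)) :=
      tendsto_const_nhds.sub (tendsto_const_div_atTop_nhds_zero_nat _)
    rw [sub_zero] at hlow
    refine tendsto_of_tendsto_of_tendsto_of_le_of_le' hlow tendsto_const_nhds ?_ ?_
    · filter_upwards [eventually_ge_atTop m] with k hk
      have hk0 : (0 : ℝ) < k := by exact_mod_cast hm.trans_le hk
      rw [one_sub_div hk0.ne', div_le_div_iff_of_pos_right hk0, sub_le_iff_le_add]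
      have h2 := Nat.div_add_mod k m
      have h3 := Nat.mod_lt k hm
      have h4 : 1 ≤ k / m := (Nat.one_le_div_iff hm).mpr hk
      obtain ⟨t, ht⟩ := Nat.exists_eq_add_of_le h4
      rw [ht] at h2 ⊢
      have : k ≤ (1 + t - 1) * m + 2 * m := by
        rw [Nat.add_sub_cancel_left]
        nlinarith
      exact_mod_cast this
    · filter_upwards [eventually_ge_atTop m] with k hk
      have hk0 : (0 : ℝ) < k := by exact_mod_cast hm.trans_le hk
      rw [div_le_one hk0]
      have : (k / m - 1) * m ≤ k :=
        (Nat.mul_le_mul_right m (Nat.sub_le _ _)).trans (Nat.div_mul_le_self k m)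
      exact_mod_cast this
  have h2 := h1.pow d
  rw [one_pow] at h2
  filter_upwards [h2.eventually (lt_mem_nhds (sub_lt_self 1 hη)), eventually_ge_atTop 1]
    with k hk hk1
  have hk0 : (0 : ℝ) < k := by exact_mod_cast hk1
  have hkd : (0 : ℝ) < (k : ℝ) ^ d := by positivity
  rw [div_pow, lt_div_iff₀ hkd] at hk
  linarith

/-- The universally typical sets `𝒯_n(h₀)` (words whose empirical
non-overlapping `k(n)`-block distribution has entropy at most `k(n)^d h₀`, with
`k(n) = ⌊(log_A n^d)^{1/d}⌋`) have `μ^n`-probability tending to `1` for every ergodic `μ`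
with entropy rate `h(μ) < h₀`. -/
theorem universally_typical_measure_one
    (A d : ℕ) (hA : 2 ≤ A) (hd : 1 ≤ d) (h0 : ℝ) (hh0 : 0 < h0)
    (μ : Measure (Config A d)) [IsProbabilityMeasure μ] (hμ : ErgodicShift μ)
    (h : ℝ) (hrate : HasEntropyRate μ h) (hlt : h < h0) :
    Tendsto (fun n : ℕ =>
        (μ {x : Config A d |
          entH A (empDist x (kOf A d n) n) ≤ ((kOf A d n : ℕ) : ℝ) ^ d * h0}).toReal)
      atTop (𝓝 1) := by
  set η : ℝ := (h0 - h) / 3 with hη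
  have hη0 : 0 < η := by
    rw [hη]
    linarith
  obtain ⟨m, hm, hmrate⟩ : ∃ m : ℕ, 0 < m ∧
      entH A (wordDist μ m) / (m : ℝ) ^ d + 1 / (m : ℝ) ^ d < h0 - 2 * η := by
    have hinv : Tendsto (fun m : ℕ => 1 / (m : ℝ) ^ d) atTop (𝓝 0) :=
      tendsto_const_nhds.div_atTop
        ((tendsto_pow_atTop (by omega)).comp tendsto_natCast_atTop_atTop)
    have hsum := hrate.add hinv
    rw [add_zero] at hsum
    have hlt' : h < h0 - 2 * η := by
      rw [hη]
      linarith
    obtain ⟨m, h1, h2⟩ :=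
      ((hsum.eventually (gt_mem_nhds hlt')).and (eventually_gt_atTop 0)).exists
    exact ⟨m, h2, h1⟩
  have hmd : (0 : ℝ) < (m : ℝ) ^ d := by positivity
  have : Nonempty (Fin A) := ⟨⟨0, by omega⟩⟩
  obtain ⟨q, hq, hq1, hcross⟩ := exists_pos_crossEntropy_le hA (wordDist μ m)
    (fun _ => ENNReal.toReal_nonneg) (sum_wordDist μ m)
  let f : Config A d → ℝ := fun x => -Real.logb A (q (wordAt x m 0))
  have hf : Measurable f :=
    (measurable_of_countable fun v : Word A d m => -Real.logb A (q v)).comp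
      (measurable_wordAt m 0)
  have hfB : ∀ x, ‖f x‖ ≤ ∑ v : Word A d m, ‖-Real.logb A (q v)‖ := fun x =>
    Finset.single_le_sum (f := fun v : Word A d m => ‖-Real.logb A (q v)‖)
      (fun _ _ => norm_nonneg _) (Finset.mem_univ (wordAt x m 0))
  have hmean : ∫ x, f x ∂μ ≤ (h0 - 2 * η) * (m : ℝ) ^ d := by
    rw [integral_comp_wordAt μ m fun v => -Real.logb A (q v)]
    rw [← add_div, div_lt_iff₀ hmd] at hmrate
    linarith
  have hk := tendsto_kOf hA hd
  have hdiv : ∀ᶠ n in atTop, 0 < n / kOf A d n := by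
    filter_upwards [hk.eventually_ge_atTop 1, eventually_ge_atTop 1] with n hkn hn
    exact Nat.div_pos (kOf_le hA hd hn) hkn
  have hM : Tendsto (fun n => kOf A d n * (n / kOf A d n)) atTop atTop := by
    refine tendsto_atTop_mono' atTop ?_ hk
    filter_upwards [hdiv] with n hn
    exact Nat.le_mul_of_pos_right _ hn
  have hbad := ((tendstoInMeasure_iff_norm.mp (hμ.tendstoInMeasure_average hf hfB))
    (η * (m : ℝ) ^ d) (by positivity)).comp hM
  have hbad' := (ENNReal.tendsto_toReal ENNReal.zero_ne_top).comp hbad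
  have hlow := hbad'.const_sub 1
  rw [ENNReal.toReal_zero, sub_zero] at hlow
  refine tendsto_of_tendsto_of_tendsto_of_le_of_le' hlow tendsto_const_nhds ?_
    (Eventually.of_forall fun n => measureReal_le_one)
  filter_upwards [hdiv, hk.eventually (eventually_boundary_le d hm hη0),
    hk.eventually_ge_atTop m] with n hn hbdry hkm
  simp only [Function.comp_apply]
  set k := kOf A d n with hkdef
  have hkd : (0 : ℝ) < (k : ℝ) ^ d := by
    have : 0 < k := hm.trans_le hkm
    positivity
  rw [sub_le_iff_le_add, ← probReal_univ (μ := μ)]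
  refine (measureReal_mono (fun x _ => ?_)).trans (measureReal_union_le _ _)
  by_contra hx
  simp only [Set.mem_union, Set.mem_ofPred_eq, not_or, not_le] at hx
  obtain ⟨hx1, hx2⟩ := hx
  have hL : m * (k / m - 1 + 1) ≤ k := by
    rw [Nat.sub_add_cancel ((Nat.one_le_div_iff hm).mpr hkm)]
    exact Nat.mul_div_le k m
  have hent := entH_empDist_le hA hm hL hn q hq hq1 x
  simp only [f, wordAt_shift] at hx2
  have havg := (lt_of_abs_lt hx2)
  rw [sub_lt_iff_lt_add] at havg
  have havg' := havg.le.trans (add_le_add_right hmean _)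
  have hmul := mul_le_mul_of_nonneg_left havg' (by positivity : 0 ≤ (k : ℝ) ^ d / (m : ℝ) ^ d)
  have hcalc : (k : ℝ) ^ d / (m : ℝ) ^ d * (η * (m : ℝ) ^ d + (h0 - 2 * η) * (m : ℝ) ^ d) =
      (k : ℝ) ^ d * (h0 - η) := by
    field_simp
    ring
  rw [hcalc] at hmul
  linarith


end SRU1408
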